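/- Suppose a design d and a real number x satisfy: (i) ∑_{s∈Q} p_s [Ĉ_{s11} + x Ĉ_{s12}] = (y*/(t−1)) B_t; (ii) ∑_{s∈Q} p_s [Ĉ_{s21} + x Ĉ_{s22}] = 0; (iii) ∑_{s∈Q} p_s B̃ (T_s + x F_s) B_t = 0; (iv) ∑_{s∈Q} p_s = 1; (v) p_s = 0 for every s ∉ Q. Then x = x*. -/

import Mathlib

open Matrix MeasureTheory
open scoped Classical

noncomputable section

/-- A treatment sequence: assigns a treatment in `Fin t` to each period in `Fin p`. -/
abbrev TrtSeq (p t : ℕ) := Fin p → Fin t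

/-- Treatment/period incidence matrix `T_s`. -/
def Tmat {p t : ℕ} (s : TrtSeq p t) : Matrix (Fin p) (Fin t) ℝ :=
  Matrix.of fun k i => if s k = i then 1 else 0

/-- Carryover incidence matrix `F_s`: first row zero, row `k` records the treatment
in period `k-1`. -/
def Fmat {p t : ℕ} (s : TrtSeq p t) : Matrix (Fin p) (Fin t) ℝ :=
  Matrix.of fun k i =>
    if (k : ℕ) = 0 then 0
    else if s ⟨(k : ℕ) - 1, Nat.lt_of_le_of_lt (Nat.sub_le _ _) k.isLt⟩ = i then 1 else 0

/-- The all-ones `m × m` matrix `J_m`. -/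
def Jmat (m : ℕ) : Matrix (Fin m) (Fin m) ℝ := Matrix.of fun _ _ => 1

/-- `B_t = I_t - J_t / t`. -/
def Bmat (t : ℕ) : Matrix (Fin t) (Fin t) ℝ := 1 - ((t : ℝ))⁻¹ • Jmat t

/-- `B̃ = Σ⁻¹ - Σ⁻¹ J_p Σ⁻¹ / (1_p' Σ⁻¹ 1_p)`. -/
def Btil {p : ℕ} (S : Matrix (Fin p) (Fin p) ℝ) : Matrix (Fin p) (Fin p) ℝ :=
  S⁻¹ - (((fun _ => (1 : ℝ)) : Fin p → ℝ) ⬝ᵥ (S⁻¹ *ᵥ fun _ => (1 : ℝ)))⁻¹ •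
    (S⁻¹ * Jmat p * S⁻¹)

/-- `G_1(s) = T_s`, `G_2(s) = F_s`. -/
def Gmat {p t : ℕ} (i : Fin 2) (s : TrtSeq p t) : Matrix (Fin p) (Fin t) ℝ :=
  if i = 0 then Tmat s else Fmat s

/-- An approximate design: nonnegative weights summing to one. -/
def IsDesign {p t : ℕ} (w : TrtSeq p t → ℝ) : Prop :=
  (∀ s, 0 ≤ w s) ∧ ∑ s : TrtSeq p t, w s = 1

/-- `Ĉ_{sij} = B_t G_i(s)' B̃ G_j(s) B_t`. -/
def Chat {p t : ℕ} (S : Matrix (Fin p) (Fin p) ℝ) (s : TrtSeq p t) (i j : Fin 2) :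
    Matrix (Fin t) (Fin t) ℝ :=
  Bmat t * (Gmat i s)ᵀ * Btil S * Gmat j s * Bmat t

/-- `c_{sij} = tr Ĉ_{sij}`. -/
def cseq {p t : ℕ} (S : Matrix (Fin p) (Fin p) ℝ) (s : TrtSeq p t) (i j : Fin 2) : ℝ :=
  (Chat S s i j).trace

/-- `Ĉ_{dij} = n ∑_s p_s Ĉ_{sij}`. -/
def ChatD {p t : ℕ} (n : ℕ) (S : Matrix (Fin p) (Fin p) ℝ) (w : TrtSeq p t → ℝ)
    (i j : Fin 2) : Matrix (Fin t) (Fin t) ℝ :=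
  (n : ℝ) • ∑ s : TrtSeq p t, w s • Chat S s i j

/-- `C_{dij} = Ĉ_{dij} - n (∑_s p_s G_i(s) B_t)' B̃ (∑_s p_s G_j(s) B_t)`. -/
def CD {p t : ℕ} (n : ℕ) (S : Matrix (Fin p) (Fin p) ℝ) (w : TrtSeq p t → ℝ)
    (i j : Fin 2) : Matrix (Fin t) (Fin t) ℝ :=
  ChatD n S w i j -
    (n : ℝ) • ((∑ s : TrtSeq p t, w s • (Gmat i s * Bmat t))ᵀ * Btil S *
      (∑ s : TrtSeq p t, w s • (Gmat j s * Bmat t)))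

/-- `c_{dij} = tr Ĉ_{dij} = n ∑_s p_s c_{sij}`. -/
def cD {p t : ℕ} (n : ℕ) (S : Matrix (Fin p) (Fin p) ℝ) (w : TrtSeq p t → ℝ)
    (i j : Fin 2) : ℝ :=
  (ChatD n S w i j).trace

/-- Fisher information matrix `C_{d,τ0,λ0}` for the direct treatment effects under the
proportional model. -/
def CInfo {p t : ℕ} (n : ℕ) (S : Matrix (Fin p) (Fin p) ℝ) (w : TrtSeq p t → ℝ)
    (τ0 : Fin t → ℝ) (l0 : ℝ) : Matrix (Fin t) (Fin t) ℝ :=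
  CD n S w 0 0 + l0 • (CD n S w 0 1 + CD n S w 1 0) + (l0 ^ 2) • CD n S w 1 1 -
    (τ0 ⬝ᵥ (CD n S w 1 1 *ᵥ τ0))⁻¹ •
      ((CD n S w 0 1 + l0 • CD n S w 1 1) * vecMulVec τ0 τ0 *
        (CD n S w 1 0 + l0 • CD n S w 1 1))

/-- Permutation matrix `S_σ` with `(S_σ)_{j,i} = 1` iff `i = σ j`. -/
def Smat {t : ℕ} (σ : Equiv.Perm (Fin t)) : Matrix (Fin t) (Fin t) ℝ :=
  Matrix.of fun j i => if i = σ j then 1 else 0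

/-- The relabelled sequence `σ ∘ s`. -/
def permSeq {p t : ℕ} (σ : Equiv.Perm (Fin t)) (s : TrtSeq p t) : TrtSeq p t := fun k => σ (s k)

/-- The design `σ d`, with weights `(σd)_s = p_{σ⁻¹ ∘ s}`. -/
def permDesign {p t : ℕ} (σ : Equiv.Perm (Fin t)) (w : TrtSeq p t → ℝ) : TrtSeq p t → ℝ :=
  fun s => w (permSeq σ⁻¹ s)

/-- A design is symmetric if its weights are invariant under treatment relabelling. -/
def IsSymmetricDesign {p t : ℕ} (w : TrtSeq p t → ℝ) : Prop :=
  ∀ (σ : Equiv.Perm (Fin t)) (s : TrtSeq p t), w (permSeq σ s) = w s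

/-- The symmetrized design `d*` with weights `p*_s = (1/t!) ∑_σ p_{σ⁻¹ ∘ s}`. -/
def symmetrize {p t : ℕ} (w : TrtSeq p t → ℝ) : TrtSeq p t → ℝ :=
  fun s => ((Nat.factorial t : ℝ))⁻¹ * ∑ σ : Equiv.Perm (Fin t), permDesign σ w s

/-- `q_s(x) = c_{s11} + 2 c_{s12} x + c_{s22} x²`. -/
def qSeq {p t : ℕ} (S : Matrix (Fin p) (Fin p) ℝ) (s : TrtSeq p t) (x : ℝ) : ℝ :=
  cseq S s 0 0 + 2 * cseq S s 0 1 * x + cseq S s 1 1 * x ^ 2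

/-- `q(x) = max_{s ∈ S} q_s(x)`. -/
def qMax (p t : ℕ) (S : Matrix (Fin p) (Fin p) ℝ) (x : ℝ) : ℝ :=
  sSup (Set.range fun s : TrtSeq p t => qSeq S s x)

/-- `y* = inf_x q(x)`. -/
def yStar (p t : ℕ) (S : Matrix (Fin p) (Fin p) ℝ) : ℝ := ⨅ x : ℝ, qMax p t S x

/-- `q_d(x) = ∑_s p_s q_s(x)`. -/
def qD {p t : ℕ} (S : Matrix (Fin p) (Fin p) ℝ) (w : TrtSeq p t → ℝ) (x : ℝ) : ℝ :=
  ∑ s : TrtSeq p t, w s * qSeq S s x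

/-- `x_d = -c_{d12}/c_{d22}`. -/
def xD {p t : ℕ} (n : ℕ) (S : Matrix (Fin p) (Fin p) ℝ) (w : TrtSeq p t → ℝ) : ℝ :=
  -(cD n S w 0 1) / cD n S w 1 1

/-- An exchangeable prior: a probability measure on `{τ : 1'τ = 0, τ ≠ 0}` that is
invariant under all coordinate permutations of `ℝ^t`. -/
def IsExchangeablePrior {t : ℕ} (g : Measure (Fin t → ℝ)) : Prop :=
  IsProbabilityMeasure g ∧
    g {τ : Fin t → ℝ | ¬((∑ i, τ i) = 0 ∧ τ ≠ 0)} = 0 ∧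
    ∀ σ : Equiv.Perm (Fin t), Measure.map (fun τ i => τ (σ i)) g = g

/-- `m_d(τ0) = min {ℓ' C_{d,τ0,λ0} ℓ : 1'ℓ = 0, ℓ'ℓ = 1}`. -/
def mD {p t : ℕ} (n : ℕ) (S : Matrix (Fin p) (Fin p) ℝ) (w : TrtSeq p t → ℝ) (l0 : ℝ)
    (τ0 : Fin t → ℝ) : ℝ :=
  sInf {v : ℝ | ∃ l : Fin t → ℝ, (∑ i, l i) = 0 ∧ l ⬝ᵥ l = 1 ∧
    v = l ⬝ᵥ (CInfo n S w τ0 l0 *ᵥ l)}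

/-- The E-criterion value `E_{g,λ0}(d) = ∫ m_d(τ0) g(dτ0)`. -/
def Ecrit {p t : ℕ} (n : ℕ) (S : Matrix (Fin p) (Fin p) ℝ) (g : Measure (Fin t → ℝ))
    (l0 : ℝ) (w : TrtSeq p t → ℝ) : ℝ :=
  ∫ τ0, mD n S w l0 τ0 ∂g

/-- Competing designs for E-optimality: designs with a.e. positive `τ0' C_{d22} τ0`
and `g`-integrable `m_d`. -/
def EAdmissible {p t : ℕ} (n : ℕ) (S : Matrix (Fin p) (Fin p) ℝ) (g : Measure (Fin t → ℝ))
    (l0 : ℝ) (w : TrtSeq p t → ℝ) : Prop :=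
  IsDesign w ∧ (∀ᵐ τ0 ∂g, 0 < τ0 ⬝ᵥ (CD n S w 1 1 *ᵥ τ0)) ∧
    Integrable (mD n S w l0) g

/-- `d` is `E_{g,λ0}`-optimal. -/
def EOptimal {p t : ℕ} (n : ℕ) (S : Matrix (Fin p) (Fin p) ℝ) (g : Measure (Fin t → ℝ))
    (l0 : ℝ) (w : TrtSeq p t → ℝ) : Prop :=
  ∀ w' : TrtSeq p t → ℝ, EAdmissible n S g l0 w' → Ecrit n S g l0 w' ≤ Ecrit n S g l0 w

/-- A pseudo symmetric design: treatments equireplicated in each period,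
and all `C_{dij}` completely symmetric. -/
def IsPseudoSymmetric {p t : ℕ} (n : ℕ) (S : Matrix (Fin p) (Fin p) ℝ)
    (w : TrtSeq p t → ℝ) : Prop :=
  (∀ (k : Fin p) (i : Fin t),
    (∑ s ∈ Finset.univ.filter fun s : TrtSeq p t => s k = i, w s) = 1 / (t : ℝ)) ∧
  ∀ i j : Fin 2, ∃ a b : ℝ, CD n S w i j = a • (1 : Matrix (Fin t) (Fin t) ℝ) + b • Jmat t

/-- Eigenvalues of a (Hermitian) matrix sorted increasingly with multiplicity. -/
def sortedEigs {t : ℕ} (C : Matrix (Fin t) (Fin t) ℝ) : Fin t → ℝ :=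
  if h : C.IsHermitian then (fun i => h.eigenvalues (Tuple.sort h.eigenvalues i))
  else fun _ => 0

/-- `Φ_D(C) = (∏_{i=1}^{t-1} a_i)^{1/(t-1)}` (eigenvalues sorted increasingly). -/
def PhiD {t : ℕ} (C : Matrix (Fin t) (Fin t) ℝ) : ℝ :=
  (∏ i ∈ Finset.univ.filter fun i : Fin t => (i : ℕ) ≠ 0, sortedEigs C i) ^ (((t : ℝ) - 1)⁻¹)

/-- `Φ_A(C) = (t-1)(∑_{i=1}^{t-1} a_i⁻¹)⁻¹` if `a_1 > 0`, else `0`. -/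
def PhiA {t : ℕ} (C : Matrix (Fin t) (Fin t) ℝ) : ℝ :=
  if ∀ i : Fin t, (i : ℕ) ≠ 0 → 0 < sortedEigs C i then
    ((t : ℝ) - 1) *
      (∑ i ∈ Finset.univ.filter fun i : Fin t => (i : ℕ) ≠ 0, (sortedEigs C i)⁻¹)⁻¹
  else 0

/-- `Φ_T(C) = tr(C)/(t-1)`. -/
def PhiT {t : ℕ} (C : Matrix (Fin t) (Fin t) ℝ) : ℝ := C.trace / ((t : ℝ) - 1)

/-- The criterion value `∫ Φ(C_{d,τ0,λ0}) g(dτ0)`. -/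
def PhiCrit {p t : ℕ} (n : ℕ) (S : Matrix (Fin p) (Fin p) ℝ)
    (Phi : Matrix (Fin t) (Fin t) ℝ → ℝ) (g : Measure (Fin t → ℝ)) (l0 : ℝ)
    (w : TrtSeq p t → ℝ) : ℝ :=
  ∫ τ0, Phi (CInfo n S w τ0 l0) ∂g

/-- Competing designs for a `Φ`-criterion. -/
def PhiAdmissible {p t : ℕ} (n : ℕ) (S : Matrix (Fin p) (Fin p) ℝ)
    (Phi : Matrix (Fin t) (Fin t) ℝ → ℝ) (g : Measure (Fin t → ℝ)) (l0 : ℝ)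
    (w : TrtSeq p t → ℝ) : Prop :=
  IsDesign w ∧ (∀ᵐ τ0 ∂g, 0 < τ0 ⬝ᵥ (CD n S w 1 1 *ᵥ τ0)) ∧
    Integrable (fun τ0 => Phi (CInfo n S w τ0 l0)) g

/-- `d` is `Φ_{g,λ0}`-optimal. -/
def PhiOptimal {p t : ℕ} (n : ℕ) (S : Matrix (Fin p) (Fin p) ℝ)
    (Phi : Matrix (Fin t) (Fin t) ℝ → ℝ) (g : Measure (Fin t → ℝ)) (l0 : ℝ)
    (w : TrtSeq p t → ℝ) : Prop :=
  ∀ w' : TrtSeq p t → ℝ, PhiAdmissible n S Phi g l0 w' →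
    PhiCrit n S Phi g l0 w' ≤ PhiCrit n S Phi g l0 w

/-- `H_1(s) = F_s`, `H_2(s) = T_s + λ0 F_s` (for estimating `λ`). -/
def Hmat {p t : ℕ} (l0 : ℝ) (i : Fin 2) (s : TrtSeq p t) : Matrix (Fin p) (Fin t) ℝ :=
  if i = 0 then Fmat s else Tmat s + l0 • Fmat s

/-- `Â_{sij} = B_t H_i(s)' B̃ H_j(s) B_t`. -/
def Ahat {p t : ℕ} (S : Matrix (Fin p) (Fin p) ℝ) (l0 : ℝ) (s : TrtSeq p t) (i j : Fin 2) :
    Matrix (Fin t) (Fin t) ℝ :=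
  Bmat t * (Hmat l0 i s)ᵀ * Btil S * Hmat l0 j s * Bmat t

/-- `h_{sij} = tr Â_{sij}`. -/
def hseq {p t : ℕ} (S : Matrix (Fin p) (Fin p) ℝ) (l0 : ℝ) (s : TrtSeq p t) (i j : Fin 2) : ℝ :=
  (Ahat S l0 s i j).trace

/-- `Â_{dij} = n ∑_s p_s Â_{sij}`. -/
def AhatD {p t : ℕ} (n : ℕ) (S : Matrix (Fin p) (Fin p) ℝ) (l0 : ℝ) (w : TrtSeq p t → ℝ)
    (i j : Fin 2) : Matrix (Fin t) (Fin t) ℝ :=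
  (n : ℝ) • ∑ s : TrtSeq p t, w s • Ahat S l0 s i j

/-- `A_{dij} = Â_{dij} - n (∑_s p_s H_i(s) B_t)' B̃ (∑_s p_s H_j(s) B_t)`. -/
def AD {p t : ℕ} (n : ℕ) (S : Matrix (Fin p) (Fin p) ℝ) (l0 : ℝ) (w : TrtSeq p t → ℝ)
    (i j : Fin 2) : Matrix (Fin t) (Fin t) ℝ :=
  AhatD n S l0 w i j -
    (n : ℝ) • ((∑ s : TrtSeq p t, w s • (Hmat l0 i s * Bmat t))ᵀ * Btil S *
      (∑ s : TrtSeq p t, w s • (Hmat l0 j s * Bmat t)))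

/-- `G` is a generalized inverse of `A`. -/
def IsGInv {t : ℕ} (A G : Matrix (Fin t) (Fin t) ℝ) : Prop := A * G * A = A

/-- `A_d(G) = A_{d11} - A_{d12} G A_{d21}` with `A_{d21} = A_{d12}'`. -/
def ADfun {p t : ℕ} (n : ℕ) (S : Matrix (Fin p) (Fin p) ℝ) (l0 : ℝ) (w : TrtSeq p t → ℝ)
    (G : Matrix (Fin t) (Fin t) ℝ) : Matrix (Fin t) (Fin t) ℝ :=
  AD n S l0 w 0 0 - AD n S l0 w 0 1 * G * (AD n S l0 w 0 1)ᵀ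

/-- `r_s(x) = h_{s11} + 2 h_{s12} x + h_{s22} x²`. -/
def rSeq {p t : ℕ} (S : Matrix (Fin p) (Fin p) ℝ) (l0 : ℝ) (s : TrtSeq p t) (x : ℝ) : ℝ :=
  hseq S l0 s 0 0 + 2 * hseq S l0 s 0 1 * x + hseq S l0 s 1 1 * x ^ 2

/-- `r(x) = max_s r_s(x)`. -/
def rMax (p t : ℕ) (S : Matrix (Fin p) (Fin p) ℝ) (l0 : ℝ) (x : ℝ) : ℝ :=
  sSup (Set.range fun s : TrtSeq p t => rSeq S l0 s x)

/-- `y_0 = inf_x r(x)`. -/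
def yZero (p t : ℕ) (S : Matrix (Fin p) (Fin p) ℝ) (l0 : ℝ) : ℝ := ⨅ x : ℝ, rMax p t S l0 x

lemma Bmat_symm (t : ℕ) : (Bmat t)ᵀ = Bmat t := by
  ext i j
  simp [Bmat, Jmat, Matrix.one_apply, eq_comm]

lemma Sinv_symm {p : ℕ} {S : Matrix (Fin p) (Fin p) ℝ} (hS : S.PosDef) : (S⁻¹)ᵀ = S⁻¹ := by
  have h := hS.inv.isHermitian
  rw [Matrix.IsHermitian, Matrix.conjTranspose_eq_transpose_of_trivial] at h
  exact h

lemma Jmat_eq (p : ℕ) : Jmat p = vecMulVec (fun _ => (1 : ℝ)) (fun _ => (1 : ℝ)) := by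
  ext i j
  simp [Jmat, vecMulVec]

lemma Btil_symm {p : ℕ} {S : Matrix (Fin p) (Fin p) ℝ} (hS : S.PosDef) :
    (Btil S)ᵀ = Btil S := by
  have hJ : (Jmat p)ᵀ = Jmat p := by
    ext i j
    simp [Jmat]
  simp [Btil, Matrix.transpose_sub, Matrix.transpose_smul, Matrix.transpose_mul,
    Sinv_symm hS, hJ, Matrix.mul_assoc]

lemma Btil_quad {p : ℕ} {S : Matrix (Fin p) (Fin p) ℝ} (hS : S.PosDef)
    (hp : 2 ≤ p) (v : Fin p → ℝ) :
    ∃ a : ℝ, v ⬝ᵥ (Btil S *ᵥ v) =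
      (v - fun _ => a) ⬝ᵥ (S⁻¹ *ᵥ (v - fun _ => a)) := by
  set e : Fin p → ℝ := fun _ => 1 with he
  set d : ℝ := e ⬝ᵥ (S⁻¹ *ᵥ e) with hd
  have hdpos : 0 < d := by
    have hne : e ≠ 0 := by
      intro h
      have := congrFun h ⟨0, by omega⟩
      simp [he] at this
    simpa using hS.inv.dotProduct_mulVec_pos hne
  have hsw : e ⬝ᵥ (S⁻¹ *ᵥ v) = v ⬝ᵥ (S⁻¹ *ᵥ e) := by
    rw [Matrix.dotProduct_mulVec, ← Matrix.mulVec_transpose, Sinv_symm hS, dotProduct_comm]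
  set b : ℝ := v ⬝ᵥ (S⁻¹ *ᵥ e) with hb
  refine ⟨b / d, ?_⟩
  have hc : (fun _ : Fin p => b / d) = (b / d) • e := by
    ext i
    simp [he]
  have hB : v ⬝ᵥ (Btil S *ᵥ v) = v ⬝ᵥ (S⁻¹ *ᵥ v) - d⁻¹ * (b * b) := by
    have : Btil S = S⁻¹ - d⁻¹ • (S⁻¹ * Jmat p * S⁻¹) := rfl
    rw [this, Matrix.sub_mulVec, dotProduct_sub, Matrix.smul_mulVec, dotProduct_smul,
      Jmat_eq, ← Matrix.mulVec_mulVec, ← Matrix.mulVec_mulVec, Matrix.vecMulVec_mulVec]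
    change _ - d⁻¹ • (v ⬝ᵥ S⁻¹ *ᵥ (MulOpposite.op (e ⬝ᵥ S⁻¹ *ᵥ v) • e)) = _
    rw [hsw, Matrix.mulVec_smul, dotProduct_smul, ← hb]
    simp
  rw [hB, hc, Matrix.mulVec_sub, Matrix.mulVec_smul, sub_dotProduct, dotProduct_sub,
    dotProduct_sub, smul_dotProduct, smul_dotProduct, dotProduct_smul, dotProduct_smul,
    hsw, ← hb, ← hd]
  simp only [smul_eq_mul]
  field_simp
  ring

lemma cseq11_eq {p t : ℕ} (S : Matrix (Fin p) (Fin p) ℝ) (s : TrtSeq p t) :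
    cseq S s 1 1 = ∑ i, (fun k => (Fmat s * Bmat t) k i) ⬝ᵥ
      (Btil S *ᵥ (fun k => (Fmat s * Bmat t) k i)) := by
  have h : Chat S s 1 1 = (Fmat s * Bmat t)ᵀ * (Btil S * (Fmat s * Bmat t)) := by
    simp [Chat, Gmat, Matrix.transpose_mul, Bmat_symm, Matrix.mul_assoc]
  rw [cseq, h, Matrix.trace]
  rfl

lemma cseq11_pos {p t : ℕ} (hp : 2 ≤ p) (ht : 3 ≤ t) {S : Matrix (Fin p) (Fin p) ℝ}
    (hS : S.PosDef) (s : TrtSeq p t) : 0 < cseq S s 1 1 := by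
  rw [cseq11_eq]
  apply Finset.sum_pos'
  · intro i _
    obtain ⟨a, ha⟩ := Btil_quad hS hp (fun k => (Fmat s * Bmat t) k i)
    rw [ha]
    exact le_of_le_of_eq (hS.inv.posSemidef.dotProduct_mulVec_nonneg
      ((fun k => (Fmat s * Bmat t) k i) - fun _ => a)) (by simp)
  · refine ⟨s ⟨0, by omega⟩, Finset.mem_univ _, ?_⟩
    obtain ⟨a, ha⟩ := Btil_quad hS hp (fun k => (Fmat s * Bmat t) k (s ⟨0, by omega⟩))
    rw [ha]
    refine lt_of_lt_of_eq (hS.inv.dotProduct_mulVec_pos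
      (x := (fun k => (Fmat s * Bmat t) k (s ⟨0, by omega⟩)) - fun _ => a) ?_) (by simp)
    intro h
    have h0 := congrFun h ⟨0, by omega⟩
    have h1 := congrFun h ⟨1, by omega⟩
    simp [Matrix.mul_apply, Fmat] at h0
    simp [Matrix.mul_apply, Fmat, Bmat, Jmat] at h1
    have hone : (1 : Matrix (Fin t) (Fin t) ℝ) (s ⟨0, by omega⟩) (s ⟨0, by omega⟩) = 1 :=
      Matrix.one_apply_eq _
    change (1 : Matrix (Fin t) (Fin t) ℝ) (s ⟨0, by omega⟩) (s ⟨0, by omega⟩) - (t : ℝ)⁻¹ - a = 0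
      at h1
    rw [hone] at h1
    have ht' : (3 : ℝ) ≤ t := by exact_mod_cast ht
    have : (t : ℝ)⁻¹ < 1 := inv_lt_one_of_one_lt₀ (by linarith)
    linarith

lemma cseq_swap {p t : ℕ} {S : Matrix (Fin p) (Fin p) ℝ}
    (hS : S.PosDef) (s : TrtSeq p t) : cseq S s 1 0 = cseq S s 0 1 := by
  rw [cseq, cseq, ← Matrix.trace_transpose (Chat S s 0 1)]
  congr 1
  simp [Chat, Matrix.transpose_mul, Bmat_symm, Btil_symm hS, Matrix.mul_assoc]

lemma trace_Bmat {t : ℕ} (ht : 3 ≤ t) : (Bmat t).trace = (t : ℝ) - 1 := by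
  have ht' : (t : ℝ) ≠ 0 := by
    have : t ≠ 0 := by omega
    exact_mod_cast this
  simp [Bmat, Jmat, Matrix.trace]
  field_simp

/-- the `x` appearing in the five optimality conditions must be `x*`. -/
theorem stmt9 (p t n : ℕ) (hp : 2 ≤ p) (ht : 3 ≤ t) (hn : 1 ≤ n)
    (S : Matrix (Fin p) (Fin p) ℝ) (hS : S.PosDef)
    (xstar : ℝ) (hxs : qMax p t S xstar = yStar p t S)
    (hxsu : ∀ x : ℝ, qMax p t S x = yStar p t S → x = xstar)
    (w : TrtSeq p t → ℝ) (hw : IsDesign w) (x : ℝ)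
    (h1 : ∑ s ∈ Finset.univ.filter (fun s : TrtSeq p t => qSeq S s xstar = yStar p t S),
        w s • (Chat S s 0 0 + x • Chat S s 0 1) = (yStar p t S / ((t : ℝ) - 1)) • Bmat t)
    (h2 : ∑ s ∈ Finset.univ.filter (fun s : TrtSeq p t => qSeq S s xstar = yStar p t S),
        w s • (Chat S s 1 0 + x • Chat S s 1 1) = 0)
    (h3 : ∑ s ∈ Finset.univ.filter (fun s : TrtSeq p t => qSeq S s xstar = yStar p t S),
        w s • (Btil S * (Tmat s + x • Fmat s) * Bmat t) = 0)
    (h4 : ∑ s ∈ Finset.univ.filter (fun s : TrtSeq p t => qSeq S s xstar = yStar p t S),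
        w s = 1)
    (h5 : ∀ s : TrtSeq p t, qSeq S s xstar ≠ yStar p t S → w s = 0) :
    x = xstar := by
  set Q := Finset.univ.filter (fun s : TrtSeq p t => qSeq S s xstar = yStar p t S) with hQ
  have ht1 : (t : ℝ) - 1 ≠ 0 := by
    have : (3 : ℝ) ≤ t := by exact_mod_cast ht
    linarith
  have e1 : ∑ s ∈ Q, w s * (cseq S s 0 0 + x * cseq S s 0 1) = yStar p t S := by
    have h := congrArg Matrix.trace h1
    rw [Matrix.trace_sum, Matrix.trace_smul, trace_Bmat ht] at h
    simp only [Matrix.trace_smul, Matrix.trace_add, smul_eq_mul] at h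
    rw [div_mul_cancel₀ _ ht1] at h
    exact h
  have e2 : ∑ s ∈ Q, w s * (cseq S s 0 1 + x * cseq S s 1 1) = 0 := by
    have h := congrArg Matrix.trace h2
    rw [Matrix.trace_sum, Matrix.trace_zero] at h
    simp only [Matrix.trace_smul, Matrix.trace_add, smul_eq_mul] at h
    rw [← h]
    refine Finset.sum_congr rfl fun s _ => ?_
    rw [← cseq_swap hS]
    rfl
  have e3 : ∑ s ∈ Q, w s * qSeq S s xstar = yStar p t S := by
    rw [Finset.sum_congr rfl (g := fun s => w s * yStar p t S), ← Finset.sum_mul, h4, one_mul]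
    intro s hs
    rw [(Finset.mem_filter.mp hs).2]
  have e4 : ∑ s ∈ Q, w s * cseq S s 1 1 * (xstar - x) ^ 2 = 0 := by
    have : ∑ s ∈ Q, w s * cseq S s 1 1 * (xstar - x) ^ 2 =
        ∑ s ∈ Q, w s * qSeq S s xstar - ∑ s ∈ Q, w s * (cseq S s 0 0 + x * cseq S s 0 1)
          - (2 * xstar - x) * ∑ s ∈ Q, w s * (cseq S s 0 1 + x * cseq S s 1 1) := by
      rw [Finset.mul_sum, ← Finset.sum_sub_distrib, ← Finset.sum_sub_distrib]
      refine Finset.sum_congr rfl fun s _ => ?_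
      rw [qSeq]
      ring
    rw [this, e1, e2, e3]
    ring
  rw [← Finset.sum_mul] at e4
  have hpos : 0 < ∑ s ∈ Q, w s * cseq S s 1 1 := by
    apply Finset.sum_pos'
    · intro s _
      exact mul_nonneg (hw.1 s) (cseq11_pos hp ht hS s).le
    · by_contra! hcon
      have : ∑ s ∈ Q, w s ≤ 0 := by
        refine Finset.sum_nonpos fun s hs => ?_
        have h := hcon s hs
        have hc := cseq11_pos hp ht hS s
        by_contra! hws
        exact absurd (mul_pos hws hc) (not_lt.mpr h)
      linarith
  rcases mul_eq_zero.mp e4 with h | h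
  · exact absurd h hpos.ne'
  · have := pow_eq_zero_iff (two_ne_zero) |>.mp h
    linarith
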